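/- arXiv:2510.25490 — 2 statements merged into one kernel-verified Lean document; each statement's English description precedes it below -/
import Mathlib

section
/- Let T be a positive integer, v : {1,…,T} → ℝ nondecreasing, a : {1,…,T} → ℝ with a_h ≥ 0 for all h, and suppose Σ_{h=1}^{T} a_h ≥ 1. Let t̄ be the least index t with Σ_{h=1}^{t} a_h ≥ 1, and for each t define S_t = v_t·(1 − Σ_{h=1}^{t−1} a_h) + Σ_{h=1}^{t−1} v_h·a_h. Then for every t with t̄ ≤ t ≤ T one has S_t ≤ S_{t̄}. -/
/-!
Consecutive right-hand sides differ by `(v (t + 1) - v t) * (1 - ∑ h ∈ Icc 1 t, a h)`. From the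
critical index on, the cumulative activation stays at least `1`, so the second factor is nonpositive
while the first is nonnegative.
-/

open Finset

theorem sum_Icc_le_sum_Icc_of_nonneg {M : Type*} [AddCommMonoid M] [PartialOrder M]
    [IsOrderedAddMonoid M] {a : ℕ → M} {k m n : ℕ} (hmn : m ≤ n)
    (ha : ∀ h ∈ Set.Ioc m n, 0 ≤ a h) :
    ∑ h ∈ Icc k m, a h ≤ ∑ h ∈ Icc k n, a h := by
  refine sum_le_sum_of_subset_of_nonneg (Icc_subset_Icc_right hmn) fun h hn hm => ha h ?_
  simp only [mem_Icc, Set.mem_Ioc] at hn hm ⊢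
  lia

section Supermodular

variable {R : Type*} [Ring R]

/-- The right-hand side `S_t` of the `t`-th supermodular constraint of formulation FZ-S, for routing
values `v` and activation levels `a` indexed from `1`. Here `Icc 1 (t - 1)` encodes `1 ≤ h < t`,
also for `t = 0`, where truncated subtraction makes it empty. -/
def supermodularRHS (v a : ℕ → R) (t : ℕ) : R :=
  v t * (1 - ∑ h ∈ Icc 1 (t - 1), a h) + ∑ h ∈ Icc 1 (t - 1), v h * a h

theorem supermodularRHS_succ_sub (v a : ℕ → R) (t : ℕ) :
    supermodularRHS v a (t + 1) - supermodularRHS v a t =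
      (v (t + 1) - v t) * (1 - ∑ h ∈ Icc 1 t, a h) := by
  cases t with
  | zero => simp [supermodularRHS]
  | succ t =>
    simp only [supermodularRHS, Nat.add_sub_cancel, sum_Icc_succ_top (Nat.le_add_left 1 t)]
    noncomm_ring

variable [PartialOrder R] [IsOrderedRing R] {v a : ℕ → R}

theorem supermodularRHS_succ_le {t : ℕ} (hv : v t ≤ v (t + 1))
    (ha : 1 ≤ ∑ h ∈ Icc 1 t, a h) :
    supermodularRHS v a (t + 1) ≤ supermodularRHS v a t := by
  rw [← sub_nonpos, supermodularRHS_succ_sub]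
  exact mul_nonpos_of_nonneg_of_nonpos (sub_nonneg.2 hv) (sub_nonpos.2 ha)

theorem stmt_4_general {m T : ℕ} (hv : MonotoneOn v (Set.Icc m T))
    (ha : ∀ h ∈ Set.Ioc m T, 0 ≤ a h) (hm : 1 ≤ ∑ h ∈ Icc 1 m, a h) :
    AntitoneOn (supermodularRHS v a) (Set.Icc m T) := by
  refine antitoneOn_of_add_one_le Set.ordConnected_Icc fun t _ ht ht' => ?_
  have hcum : 1 ≤ ∑ h ∈ Icc 1 t, a h :=
    hm.trans (sum_Icc_le_sum_Icc_of_nonneg ht.1 fun h hh => ha h ⟨hh.1, hh.2.trans ht.2⟩)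
  exact supermodularRHS_succ_le (hv ht ht' t.le_succ) hcum

end Supermodular

/-- for a nondecreasing sequence `v` on `{1, …, T}` and nonnegative
activation levels `a` with total at least `1`, letting `tb` be the least index whose
cumulative activation reaches `1` and `S t` the `t`-th supermodular right-hand side,
one has `S t ≤ S tb` for every `tb ≤ t ≤ T`. -/
theorem stmt_4 (T : ℕ) (hT : 1 ≤ T) (v a : ℕ → ℝ)
    (hmono : ∀ h₁ ∈ Finset.Icc 1 T, ∀ h₂ ∈ Finset.Icc 1 T, h₁ ≤ h₂ → v h₁ ≤ v h₂)
    (ha : ∀ h ∈ Finset.Icc 1 T, 0 ≤ a h)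
    (hsum : 1 ≤ ∑ h ∈ Finset.Icc 1 T, a h)
    (tb : ℕ) (htb1 : 1 ≤ tb) (htbT : tb ≤ T)
    (htbge : 1 ≤ ∑ h ∈ Finset.Icc 1 tb, a h)
    (htbmin : ∀ t, 1 ≤ t → t < tb → ∑ h ∈ Finset.Icc 1 t, a h < 1)
    (S : ℕ → ℝ)
    (hS : ∀ t, S t = v t * (1 - ∑ h ∈ Finset.Icc 1 (t - 1), a h) +
      ∑ h ∈ Finset.Icc 1 (t - 1), v h * a h)
    (t : ℕ) (ht1 : tb ≤ t) (htT : t ≤ T) :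
    S t ≤ S tb := by
  obtain rfl : S = supermodularRHS v a := funext hS
  have hv : MonotoneOn v (Set.Icc tb T) := fun i hi j hj =>
    hmono i (mem_Icc.2 ⟨htb1.trans hi.1, hi.2⟩) j (mem_Icc.2 ⟨htb1.trans hj.1, hj.2⟩)
  have ha' : ∀ h ∈ Set.Ioc tb T, 0 ≤ a h := fun h hh =>
    ha h (mem_Icc.2 ⟨htb1.trans hh.1.le, hh.2⟩)
  exact stmt_4_general hv ha' htbge ⟨le_rfl, htbT⟩ ⟨ht1, htT⟩ ht1
end

section
/- Consider the MA-HLP data: finite node set V, edge set E of unordered pairs of distinct nodes, finite nonempty commodity set R with commodities r = (o^r, d^r, w^r), w^r ≥ 0, nonnegative symmetric unit costs c satisfying the triangle inequality with c(i,i)=0, factors 0 ≤ α ≤ 1, γ, θ ≥ 0, and setup costs f_i ≥ 0. For each r let the candidate routing values { F_re : e ∈ E^r } ∪ { H_ri : i ∈ V^r } together with a value M exceeding all of them (the fictitious edge) be sorted nondecreasingly as v̄_{r1} ≤ … ≤ v̄_{rT_r}, with position sets T^r_y (edge values, position h carrying edge e_h) and T^r_z (node values, position h carrying node i_h). Let ȳ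 ∈ [0,1]^{E∪{ẽ}} and z̄ ∈ [0,1]^V be such that for each r ∈ R, Σ_{h ∈ T^r_y} ȳ_{e_h} + Σ_{h ∈ T^r_z} z̄_{i_h} ≥ 1, and let t̄_r be the least t with Σ_{h ∈ T^r_y, h ≤ t} ȳ_{e_h} + Σ_{h ∈ T^r_z, h ≤ t} z̄_{i_h} ≥ 1. Then the minimum over η : R → ℝ with η^r ≥ 0 and η^r ≥ v̄_{rt} + Σ_{h ∈ T^r_y, h < t}(v̄_{rh} − v̄_{rt})·ȳ_{e_h} + Σ_{h ∈ T^r_z, h < t}(v̄_{rh} − v̄_{rt})·z̄_{i_h} for all t, of the objective Σ_{i∈V} f_i z̄_i + Σ_{r∈R} η^r, equals Σ_{i∈V} f_i z̄_i + Σ_{r∈R} [ v̄_{r t̄_r}·(1 − Σ_{h < t̄_r} ȳ_{e_h} − Σ_{h < t̄_r} z̄_{i_h}) + Σ_{h ∈ T^r_y, h < t̄_r} v̄_{rh}·ȳ_{e_h} + Σ_{h ∈ T^r_z, h < t̄_r} v̄_{rh}·z̄_{i_h} ]. -/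
open Finset

/-!
At fixed activations the problem separates over commodities. For one commodity, routing one unit
of flow through candidates of capacity `x h` and unit cost `v h` is a fractional knapsack problem.
Every supermodular inequality is a weak-duality bound: its right-hand side is at most the cost of
any unit flow within the capacities. The greedy flow, which fills the cheapest candidates up to the
critical position, attains the bound given by the inequality at that position. Its cost is therefore
the least feasible `η`.
-/

section SumLemmas

variable {ι R M 𝕜 : Type*}

lemma sum_filter_lt_le_of_forall_sum_filter_le [LinearOrder ι] [AddCommMonoid M] [Preorder M]
    {A : Finset ι} {x : ι → M} {s : ι} {b : M} (hb : 0 ≤ b)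
    (h : ∀ t ∈ A, t < s → ∑ i ∈ A with i ≤ t, x i ≤ b) : ∑ i ∈ A with i < s, x i ≤ b := by
  rcases (A.filter (· < s)).eq_empty_or_nonempty with hempty | hne
  · simpa only [hempty, sum_empty] using hb
  · obtain ⟨hmem, hlt⟩ := mem_filter.1 (max'_mem _ hne)
    have hfilter : A.filter (· < s) = A.filter (· ≤ (A.filter (· < s)).max' hne) :=
      filter_congr fun i hi ↦
        ⟨fun his ↦ le_max' _ _ (mem_filter.2 ⟨hi, his⟩), fun hle ↦ hle.trans_lt hlt⟩
    rw [hfilter]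
    exact h _ hmem hlt

lemma sum_filter_union_piecewise [DecidableEq ι] [AddCommMonoid M] {S T : Finset ι}
    (hST : Disjoint S T) (p : ι → Prop) [DecidablePred p] (y z : ι → M) :
    ∑ h ∈ S ∪ T with p h, S.piecewise y z h = ∑ h ∈ S with p h, y h + ∑ h ∈ T with p h, z h := by
  rw [filter_union, sum_union (disjoint_filter_filter hST)]
  congr 1
  · exact sum_congr rfl fun h hh ↦ S.piecewise_eq_of_mem _ _ (mem_filter.1 hh).1
  · exact sum_congr rfl fun h hh ↦
      S.piecewise_eq_of_notMem _ _ (disjoint_right.1 hST (mem_filter.1 hh).1)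

lemma sum_filter_union_mul_piecewise [DecidableEq ι] [NonUnitalNonAssocSemiring 𝕜] {S T : Finset ι}
    (hST : Disjoint S T) (p : ι → Prop) [DecidablePred p] (a y z : ι → 𝕜) :
    ∑ h ∈ S ∪ T with p h, a h * S.piecewise y z h =
      ∑ h ∈ S with p h, a h * y h + ∑ h ∈ T with p h, a h * z h := by
  simp only [← sum_filter_union_piecewise hST, piecewise, mul_ite]

lemma isLeast_const_add_sum [Fintype R] [AddCommMonoid M] [Preorder M] [AddLeftMono M] (c : M)
    {S : R → Set M} {m : R → M} (h : ∀ r, IsLeast (S r) (m r)) :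
    IsLeast {b | ∃ η : R → M, (∀ r, η r ∈ S r) ∧ b = c + ∑ r, η r} (c + ∑ r, m r) := by
  refine ⟨⟨m, fun r ↦ (h r).1, rfl⟩, ?_⟩
  rintro b ⟨η, hη, rfl⟩
  gcongr with r
  exact (h r).2 (hη r)

end SumLemmas

section FractionalKnapsack

variable {ι 𝕜 : Type*} [LinearOrder ι] [CommRing 𝕜]

/-- The right-hand side of the supermodular inequality at position `t`, for candidates `A` with
routing values `v` and activations `x`. -/
def supermodularBound (A : Finset ι) (v x : ι → 𝕜) (t : ι) : 𝕜 :=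
  v t + ∑ h ∈ A with h < t, (v h - v t) * x h

/-- The flow using each candidate before `s` to its full capacity `x h` and sending the remainder of
one unit through `s`. It is within the capacities when `s` is the critical position. -/
def greedyFlow (A : Finset ι) (x : ι → 𝕜) (s h : ι) : 𝕜 :=
  if h < s then x h else if h = s then 1 - ∑ i ∈ A with i < s, x i else 0

variable {A : Finset ι} {v x p : ι → 𝕜} {s : ι}

lemma sum_mul_greedyFlow (g : ι → 𝕜) (hs : s ∈ A) :
    ∑ h ∈ A, g h * greedyFlow A x s h =
      g s * (1 - ∑ h ∈ A with h < s, x h) + ∑ h ∈ A with h < s, g h * x h := by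
  have hsplit : ∀ h, g h * greedyFlow A x s h =
      (if h = s then g h * (1 - ∑ i ∈ A with i < s, x i) else 0) +
        if h < s then g h * x h else 0 := by
    intro h
    rcases lt_trichotomy h s with hlt | rfl | hgt
    · simp [greedyFlow, hlt, hlt.ne]
    · simp [greedyFlow]
    · simp [greedyFlow, hgt.not_gt, hgt.ne']
  simp only [hsplit, sum_add_distrib, sum_ite_eq', hs, if_true, sum_filter]

lemma sum_greedyFlow (hs : s ∈ A) : ∑ h ∈ A, greedyFlow A x s h = 1 := by
  simpa using sum_mul_greedyFlow (x := x) 1 hs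

lemma sum_mul_greedyFlow_eq_supermodularBound (hs : s ∈ A) :
    ∑ h ∈ A, v h * greedyFlow A x s h = supermodularBound A v x s := by
  rw [sum_mul_greedyFlow v hs, supermodularBound]
  simp only [sub_mul, sum_sub_distrib, ← mul_sum]
  ring

variable [PartialOrder 𝕜] [IsOrderedRing 𝕜]

lemma greedyFlow_nonneg (hx : ∀ h ∈ A, 0 ≤ x h) (hlt : ∑ h ∈ A with h < s, x h ≤ 1) :
    ∀ h ∈ A, 0 ≤ greedyFlow A x s h := by
  intro h hh
  unfold greedyFlow
  split_ifs
  exacts [hx h hh, sub_nonneg.2 hlt, le_rfl]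

lemma greedyFlow_le (hs : s ∈ A) (hx : ∀ h ∈ A, 0 ≤ x h)
    (hle : 1 ≤ ∑ h ∈ A with h ≤ s, x h) : ∀ h ∈ A, greedyFlow A x s h ≤ x h := by
  have hinsert : A.filter (· ≤ s) = insert s (A.filter (· < s)) := by
    ext h
    grind
  have hremainder : 1 - ∑ h ∈ A with h < s, x h ≤ x s := by
    rwa [sub_le_iff_le_add, ← sum_insert (by simp), ← hinsert]
  intro h hh
  unfold greedyFlow
  split_ifs with _ heq
  exacts [le_rfl, heq ▸ hremainder, hx h hh]

lemma supermodularBound_le_sum_mul (hv : MonotoneOn v A) (hp0 : ∀ h ∈ A, 0 ≤ p h)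
    (hpx : ∀ h ∈ A, p h ≤ x h) (hp1 : ∑ h ∈ A, p h = 1) {t : ι} (ht : t ∈ A) :
    supermodularBound A v x t ≤ ∑ h ∈ A, v h * p h := by
  have hterm : ∀ h ∈ A, (if h < t then (v h - v t) * x h else 0) ≤ (v h - v t) * p h := by
    intro h hh
    split_ifs with hlt
    · exact mul_le_mul_of_nonpos_left (hpx h hh) (sub_nonpos.2 (hv hh ht hlt.le))
    · exact mul_nonneg (sub_nonneg.2 (hv ht hh (not_lt.1 hlt))) (hp0 h hh)
  calc supermodularBound A v x t
      = v t + ∑ h ∈ A, if h < t then (v h - v t) * x h else 0 := by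
        rw [supermodularBound, sum_filter]
    _ ≤ v t + ∑ h ∈ A, (v h - v t) * p h := by gcongr with h hh; exact hterm h hh
    _ = ∑ h ∈ A, v h * p h := by
        simp only [sub_mul, sum_sub_distrib, ← mul_sum, hp1]
        ring

theorem isLeast_sum_mul_greedyFlow (hs : s ∈ A) (hv0 : ∀ h ∈ A, 0 ≤ v h) (hv : MonotoneOn v A)
    (hx : ∀ h ∈ A, 0 ≤ x h) (hlt : ∑ h ∈ A with h < s, x h ≤ 1)
    (hle : 1 ≤ ∑ h ∈ A with h ≤ s, x h) :
    IsLeast {η | 0 ≤ η ∧ ∀ t ∈ A, supermodularBound A v x t ≤ η}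
      (∑ h ∈ A, v h * greedyFlow A x s h) := by
  have hp0 := greedyFlow_nonneg hx hlt
  refine ⟨⟨sum_nonneg fun h hh ↦ mul_nonneg (hv0 h hh) (hp0 h hh), fun t ht ↦ ?_⟩, ?_⟩
  · exact supermodularBound_le_sum_mul hv hp0 (greedyFlow_le hs hx hle) (sum_greedyFlow hs) ht
  · rintro η ⟨-, hη⟩
    exact (sum_mul_greedyFlow_eq_supermodularBound hs).trans_le (hη s hs)

theorem stmt_8_general {R : Type*} [Fintype R] (c : 𝕜) (v : R → ι → 𝕜) (Ty Tz : R → Finset ι)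
    (hdisj : ∀ r, Disjoint (Ty r) (Tz r))
    (hv0 : ∀ r, ∀ h ∈ Ty r ∪ Tz r, 0 ≤ v r h)
    (hmono : ∀ r, MonotoneOn (v r) ↑(Ty r ∪ Tz r))
    (y z : R → ι → 𝕜) (hy : ∀ r, ∀ h ∈ Ty r, 0 ≤ y r h) (hz : ∀ r, ∀ h ∈ Tz r, 0 ≤ z r h)
    (tbar : R → ι) (htbmem : ∀ r, tbar r ∈ Ty r ∪ Tz r)
    (htbge : ∀ r, 1 ≤ ∑ h ∈ Ty r with h ≤ tbar r, y r h + ∑ h ∈ Tz r with h ≤ tbar r, z r h)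
    (htbmin : ∀ r, ∀ t ∈ Ty r ∪ Tz r, t < tbar r →
      ∑ h ∈ Ty r with h ≤ t, y r h + ∑ h ∈ Tz r with h ≤ t, z r h < 1) :
    IsLeast
      {obj : 𝕜 | ∃ η : R → 𝕜, (∀ r, 0 ≤ η r) ∧
        (∀ r, ∀ t ∈ Ty r ∪ Tz r,
          v r t + ∑ h ∈ Ty r with h < t, (v r h - v r t) * y r h +
            ∑ h ∈ Tz r with h < t, (v r h - v r t) * z r h ≤ η r) ∧
        obj = c + ∑ r, η r}
      (c + ∑ r,
        (v r (tbar r) *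
            (1 - ∑ h ∈ Ty r with h < tbar r, y r h - ∑ h ∈ Tz r with h < tbar r, z r h) +
          ∑ h ∈ Ty r with h < tbar r, v r h * y r h +
          ∑ h ∈ Tz r with h < tbar r, v r h * z r h)) := by
  have hx : ∀ r, ∀ h ∈ Ty r ∪ Tz r, 0 ≤ (Ty r).piecewise (y r) (z r) h := by
    intro r h hh
    by_cases hTy : h ∈ Ty r
    · simpa only [piecewise_eq_of_mem _ _ _ hTy] using hy r h hTy
    · simpa only [piecewise_eq_of_notMem _ _ _ hTy] using
        hz r h ((mem_union.1 hh).resolve_left hTy)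
  simp only [← sum_filter_union_piecewise (hdisj _)] at htbge htbmin
  have hlt := fun r ↦ sum_filter_lt_le_of_forall_sum_filter_le zero_le_one
    fun t ht htr ↦ (htbmin r t ht htr).le
  have hleast := isLeast_const_add_sum c fun r ↦
    isLeast_sum_mul_greedyFlow (htbmem r) (hv0 r) (hmono r) (hx r) (hlt r) (htbge r)
  simpa only [Set.mem_ofPred_eq, forall_and, and_assoc, sum_mul_greedyFlow _ (htbmem _),
    supermodularBound, sum_filter_union_piecewise (hdisj _),
    sum_filter_union_mul_piecewise (hdisj _), sub_add_eq_sub_sub, ← add_assoc] using hleast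

end FractionalKnapsack

/-- closed form for the optimal value of the η-minimization of the LP
relaxation of FZ-S at fixed activation values `ȳ, z̄`.  For each commodity `r` the sorted
candidate routing values `v r 1 ≤ … ≤ v r (Tr r)` (nonnegative, including the arbitrarily
large value of the fictitious edge) occupy edge positions `Ty r` (position `h` carrying
edge `er r h`, possibly the fictitious edge `none`) and node positions `Tz r` (position
`h` carrying node `ir r h`).  If the total activation of each commodity is at least `1`
and `tbar r` is the least position where the cumulative activation reaches `1`, then the
minimum of `∑ i, f i * z̄ i + ∑ r, η r` over all `η ≥ 0` satisfying the supermodular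
constraints equals the claimed closed-form value. -/
theorem stmt_8 {V : Type*} [Fintype V] [DecidableEq V]
    {R : Type*} [Fintype R] [Nonempty R]
    (f : V → ℝ) (hf : ∀ i, 0 ≤ f i)
    (Tr : R → ℕ) (hTr : ∀ r, 1 ≤ Tr r)
    (v : R → ℕ → ℝ)
    (hv0 : ∀ r, ∀ h ∈ Finset.Icc 1 (Tr r), 0 ≤ v r h)
    (hmono : ∀ r, ∀ h₁ ∈ Finset.Icc 1 (Tr r), ∀ h₂ ∈ Finset.Icc 1 (Tr r),
      h₁ ≤ h₂ → v r h₁ ≤ v r h₂)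
    (Ty Tz : R → Finset ℕ)
    (hdisj : ∀ r, Disjoint (Ty r) (Tz r))
    (hpart : ∀ r, Ty r ∪ Tz r = Finset.Icc 1 (Tr r))
    (er : R → ℕ → Option (Sym2 V)) (ir : R → ℕ → V)
    (ybar : Option (Sym2 V) → ℝ) (zbar : V → ℝ)
    (hy : ∀ e, ybar e ∈ Set.Icc (0 : ℝ) 1) (hz : ∀ i, zbar i ∈ Set.Icc (0 : ℝ) 1)
    (hcov : ∀ r, 1 ≤ (∑ h ∈ Ty r, ybar (er r h)) + ∑ h ∈ Tz r, zbar (ir r h))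
    (tbar : R → ℕ)
    (htbmem : ∀ r, tbar r ∈ Finset.Icc 1 (Tr r))
    (htbge : ∀ r, 1 ≤ (∑ h ∈ (Ty r).filter (· ≤ tbar r), ybar (er r h)) +
      ∑ h ∈ (Tz r).filter (· ≤ tbar r), zbar (ir r h))
    (htbmin : ∀ r, ∀ t < tbar r,
      (∑ h ∈ (Ty r).filter (· ≤ t), ybar (er r h)) +
        (∑ h ∈ (Tz r).filter (· ≤ t), zbar (ir r h)) < 1) :
    IsLeast
      {obj : ℝ | ∃ η : R → ℝ, (∀ r, 0 ≤ η r) ∧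
        (∀ r, ∀ t ∈ Finset.Icc 1 (Tr r),
          v r t + (∑ h ∈ (Ty r).filter (· < t), (v r h - v r t) * ybar (er r h)) +
            (∑ h ∈ (Tz r).filter (· < t), (v r h - v r t) * zbar (ir r h)) ≤ η r) ∧
        obj = (∑ i, f i * zbar i) + ∑ r, η r}
      ((∑ i, f i * zbar i) + ∑ r,
        (v r (tbar r) *
            (1 - (∑ h ∈ (Ty r).filter (· < tbar r), ybar (er r h)) -
              ∑ h ∈ (Tz r).filter (· < tbar r), zbar (ir r h)) +
          (∑ h ∈ (Ty r).filter (· < tbar r), v r h * ybar (er r h)) +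
          ∑ h ∈ (Tz r).filter (· < tbar r), v r h * zbar (ir r h))) := by
  simp only [← hpart] at hv0 hmono htbmem ⊢
  exact stmt_8_general _ v Ty Tz hdisj hv0 (fun r a ha b hb ↦ hmono r a ha b hb) _ _
    (fun r h _ ↦ (hy (er r h)).1) (fun r h _ ↦ (hz (ir r h)).1) tbar htbmem htbge
    fun r t _ ↦ htbmin r t
end
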